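/- For every z > −1 and every k < n, the roots in x of ∂_z^{k+1} L_n(x,z) strictly interlace the roots of ∂_z^k L_n(x,z): between any two consecutive real roots of ∂_z^k L_n(·,z) there lies exactly one root of ∂_z^{k+1} L_n(·,z), and all roots of ∂_z^{k+1} L_n(·,z) arise this way. -/

import Mathlib

open Polynomial Finset

/-- The generalized Laguerre polynomial as a bivariate polynomial: the outer variable is
the parameter z, the inner coefficients are polynomials in x. -/
noncomputable def laguerreBiv (n : Nat) : Polynomial (Polynomial Real) :=
  Finset.sum (Finset.range (n + 1)) fun k =>
    Polynomial.C (Polynomial.C ((-1 : Real) ^ k / ((k.factorial : Real) * ((n - k).factorial : Real))) *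
        Polynomial.X ^ k) *
      Finset.prod (Finset.Icc (k + 1) n) fun j =>
        (Polynomial.X + Polynomial.C (Polynomial.C (j : Real)))

/-- The k-th derivative in the parameter z of the Laguerre polynomial, specialized at a
real value z, as a polynomial in x. -/
noncomputable def laguerreDz (n k : Nat) (z : Real) : Polynomial Real :=
  (Polynomial.derivative^[k] (laguerreBiv n)).eval (Polynomial.C z)

theorem prod_sign (a : ℕ → ℝ) (x : ℝ) (i m : ℕ) (him : i ≤ m)
    (h1 : ∀ l, l < i → x < a l) (h2 : ∀ l, i ≤ l → l < m → a l < x) :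
    0 < (-1 : ℝ) ^ i * ∏ l ∈ range m, (x - a l) := by
  induction m generalizing i with
  | zero => obtain rfl : i = 0 := by omega
            simp
  | succ m ih =>
    rw [prod_range_succ]
    rcases Nat.lt_or_ge m i with h | h
    · obtain rfl : i = m + 1 := by omega
      have := ih m le_rfl (fun l hl => h1 l (by omega)) (fun l hl hl' => by omega)
      have h3 := h1 m (by omega)
      have h4 : 0 < a m - x := by linarith
      have := mul_pos this h4
      rw [pow_succ]; nlinarith
    · have := ih i h h1 (fun l hl hl' => h2 l hl (by omega))
      have h4 : 0 < x - a m := by linarith [h2 m h (by omega)]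
      have := mul_pos this h4
      nlinarith

/-- polynomial of degree `m` with sign changes along a decreasing sequence -/
theorem roots_of_signs (p : ℝ[X]) (m : ℕ) (hp : p.natDegree = m) (e : ℕ → ℝ)
    (he : ∀ i, i < m → e (i + 1) < e i)
    (hs : ∀ i, i ≤ m → 0 < (-1 : ℝ) ^ i * p.eval (e i)) :
    ∃ a : ℕ → ℝ, p.roots = (Multiset.range m).map a ∧ p.roots.Nodup ∧
      ∀ i, i < m → e (i + 1) < a i ∧ a i < e i := by
  have hp0 : p ≠ 0 := by
    rintro rfl
    simpa using hs 0 (by omega)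
  have key : ∀ i, ∃ y, i < m → p.eval y = 0 ∧ e (i + 1) < y ∧ y < e i := by
    intro i
    by_cases hi : i < m
    · have h1 := hs i (by omega)
      have h2 := hs (i + 1) (by omega)
      have hc : ContinuousOn (fun y => (-1 : ℝ) ^ i * p.eval y) (Set.Icc (e (i + 1)) (e i)) := by
        fun_prop
      have := intermediate_value_Ioo (he i hi).le hc
      have h0 : (0 : ℝ) ∈ Set.Ioo ((-1 : ℝ) ^ i * p.eval (e (i + 1))) ((-1 : ℝ) ^ i * p.eval (e i)) := by
        refine ⟨?_, h1⟩
        rw [pow_succ] at h2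
        linarith
      obtain ⟨y, hy, hy0⟩ := this h0
      refine ⟨y, fun _ => ⟨?_, hy.1, hy.2⟩⟩
      simpa using hy0
    · exact ⟨0, fun h => absurd h hi⟩
  choose a ha using key
  have hanti : ∀ d i, i + d + 1 < m → a (i + d + 1) < a i := by
    intro d
    induction d with
    | zero => intro i hi
              exact lt_trans (ha (i + 1) hi).2.2 (ha i (by omega)).2.1
    | succ d ih => intro i hi
                   exact lt_trans (lt_trans (ha (i + (d + 1) + 1) hi).2.2
                     (ha (i + d + 1) (by omega)).2.1) (ih i (by omega))
  have hnd : ((Multiset.range m).map a).Nodup := by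
    refine Multiset.Nodup.map_on ?_ (Multiset.nodup_range m)
    intro i hi j hj hij
    rw [Multiset.mem_range] at hi hj
    by_contra hne
    rcases Nat.lt_or_gt_of_ne hne with h | h
    · obtain ⟨d, rfl⟩ := Nat.exists_eq_add_of_lt h
      exact absurd hij (hanti d i hj).ne'
    · obtain ⟨d, rfl⟩ := Nat.exists_eq_add_of_lt h
      exact absurd hij (hanti d j hi).ne
  suffices h : (Multiset.range m).map a = p.roots from
    ⟨a, h.symm, h ▸ hnd, fun i hi => (ha i hi).2⟩
  apply Multiset.eq_of_le_of_card_le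
  · rw [Multiset.le_iff_subset hnd]
    intro y hy
    obtain ⟨i, hi, rfl⟩ := Multiset.mem_map.1 hy
    rw [mem_roots hp0]
    exact (ha i (Multiset.mem_range.1 hi)).1
  · simpa [hp] using card_roots' p

theorem eval_of_roots (p : ℝ[X]) (m : ℕ) (hp : p.natDegree = m) (a : ℕ → ℝ)
    (h : p.roots = (Multiset.range m).map a) (x : ℝ) :
    p.eval x = p.leadingCoeff * ∏ l ∈ range m, (x - a l) := by
  have := C_leadingCoeff_mul_prod_multiset_X_sub_C (p := p) (by simp [h, hp])
  conv_lhs => rw [← this]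
  rw [h, Multiset.map_map, eval_mul, eval_C, eval_multiset_prod, Multiset.map_map]
  simp only [Function.comp_def, eval_sub, eval_X, eval_C]
  rfl

theorem exists_large_pos (p : ℝ[X]) (hd : 0 < p.natDegree) (hl : 0 < p.leadingCoeff) (B : ℝ) :
    ∃ M, B < M ∧ 0 < p.eval M := by
  have h := p.tendsto_atTop_of_leadingCoeff_nonneg (natDegree_pos_iff_degree_pos.1 hd) hl.le
  obtain ⟨M, h1, h2⟩ := ((Filter.eventually_gt_atTop B).and (h.eventually_gt_atTop 0)).exists
  exact ⟨M, h1, h2⟩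

theorem sturm (P : ℕ → ℝ[X]) (N : ℕ)
    (hdeg : ∀ j, j ≤ N → (P j).natDegree = j)
    (hlead : ∀ j, j ≤ N → 0 < (P j).leadingCoeff)
    (hzero : ∀ j, j ≤ N → 0 < (-1 : ℝ) ^ j * (P j).eval 0)
    (hrel : ∀ j, j + 2 ≤ N → ∀ x, 0 < x → (P (j + 1)).eval x = 0 →
      (P j).eval x * (P (j + 2)).eval x < 0)
    (j : ℕ) (hj : j + 1 ≤ N) :
    ∃ a b : ℕ → ℝ,
      (P (j + 1)).roots = (Multiset.range (j + 1)).map a ∧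
      (P j).roots = (Multiset.range j).map b ∧
      (∀ i : ℕ, i + 1 < j + 1 → a (i + 1) < a i) ∧
      (∀ i : ℕ, i < j → b i < a i ∧ a (i + 1) < b i) ∧
      (∀ i : ℕ, i < j + 1 → 0 < a i) ∧ (P (j + 1)).roots.Nodup := by
  induction j with
  | zero =>
    obtain ⟨M, hM, hM'⟩ := exists_large_pos (P 1) (by rw [hdeg 1 hj]; omega) (hlead 1 hj) 0
    obtain ⟨a, ha, hnd, ha'⟩ := roots_of_signs (P 1) 1 (hdeg 1 hj) (fun i => if i = 0 then M else 0)
      (by intro i hi; obtain rfl : i = 0 := by omega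
          simpa using hM)
      (by intro i hi
          rcases Nat.eq_zero_or_pos i with rfl | h
          · simpa using hM'
          · obtain rfl : i = 1 := by omega
            simpa using hzero 1 hj)
    refine ⟨a, a, ha, ?_, by intro i hi; omega, by intro i hi; omega, ?_, hnd⟩
    · have := card_roots' (P 0)
      rw [hdeg 0 (by omega)] at this
      simpa using this
    · intro i hi
      have := (ha' i hi).1
      simpa using this
  | succ j ih =>
    obtain ⟨a, b, ha, hb, hanti, hab, hpos, _⟩ := ih (by omega)
    have hle : ∀ d i, i + d < j + 1 → a (i + d) ≤ a i := by
      intro d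
      induction d with
      | zero => intro i _; exact le_rfl
      | succ d ihd => intro i hi
                      exact (hanti (i + d) hi).le.trans (ihd i (by omega))
    have hle' : ∀ i l, i ≤ l → l < j + 1 → a l ≤ a i := by
      intro i l hil hl
      obtain ⟨d, rfl⟩ := Nat.exists_eq_add_of_le hil
      exact hle d i hl
    have hsign : ∀ i, i < j + 1 → 0 < (-1 : ℝ) ^ i * (P j).eval (a i) := by
      intro i hi
      rw [eval_of_roots (P j) j (hdeg j (by omega)) b hb]
      have := prod_sign b (a i) i j (by omega)
        (fun l hl => lt_of_le_of_lt (hle' (l + 1) i hl hi) (hab l (by omega)).2)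
        (fun l hl hl' => lt_of_lt_of_le (hab l hl').1 (hle' i l hl (by omega)))
      have := mul_pos (hlead j (by omega)) this
      linarith
    have hroot : ∀ i, i < j + 1 → (P (j + 1)).eval (a i) = 0 := by
      intro i hi
      have : a i ∈ (P (j + 1)).roots := by
        rw [ha]; exact Multiset.mem_map_of_mem _ (Multiset.mem_range.2 hi)
      exact (mem_roots'.1 this).2
    have hsign2 : ∀ i, i < j + 1 → 0 < (-1 : ℝ) ^ (i + 1) * (P (j + 2)).eval (a i) := by
      intro i hi
      have h1 := hsign i hi
      have h2 := hrel j (by omega) (a i) (hpos i hi) (hroot i hi)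
      rcases neg_one_pow_eq_or ℝ i with h | h <;> rw [pow_succ, h] <;> rw [h] at h1 <;> nlinarith
    obtain ⟨M, hM, hM'⟩ := exists_large_pos (P (j + 2)) (by rw [hdeg _ hj]; omega) (hlead _ hj) (a 0)
    obtain ⟨a', ha', hnd, hbd⟩ := roots_of_signs (P (j + 2)) (j + 2) (hdeg _ hj)
      (fun i => if i = 0 then M else if i < j + 2 then a (i - 1) else 0)
      (by
        intro i hi
        rcases Nat.eq_zero_or_pos i with rfl | h
        · simpa using hM
        · obtain ⟨i, rfl⟩ : ∃ i', i = i' + 1 := ⟨i - 1, by omega⟩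
          by_cases h' : i < j
          · have := hanti i (by omega)
            simpa [h', hi, show i < j + 1 by omega] using this
          · have := hpos i (by omega)
            simpa [h', hi, show i < j + 1 by omega] using this)
      (by
        intro i hi
        rcases Nat.eq_zero_or_pos i with rfl | h
        · simpa using hM'
        · obtain ⟨i, rfl⟩ : ∃ i', i = i' + 1 := ⟨i - 1, by omega⟩
          by_cases h' : i < j + 1
          · simpa [h'] using hsign2 i h'
          · obtain rfl : i = j + 1 := by omega
            simpa using hzero (j + 2) hj)
    have hup : ∀ i, i < j + 1 → a' (i + 1) < a i := by
      intro i hi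
      have := (hbd (i + 1) (by omega)).2
      simpa [hi] using this
    have hlow : ∀ i, i < j + 1 → a i < a' i := by
      intro i hi
      have := (hbd i (by omega)).1
      simpa [hi] using this
    refine ⟨a', a, ha', ha, fun i hi => (hup i (by omega)).trans (hlow i (by omega)),
      fun i hi => ⟨hlow i hi, hup i hi⟩, ?_, hnd⟩
    intro i hi
    by_cases h : i < j + 1
    · exact (hpos i h).trans (hlow i h)
    · obtain rfl : i = j + 1 := by omega
      have := (hbd (j + 1) hi).1
      simpa using this

/-- Laguerre's inequality for products of linear factors. -/
theorem laguerre_ineq_prod (s : Multiset ℝ) (c : ℝ) (q : ℝ[X])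
    (hq : q = (s.map fun a => X - C a).prod) :
    0 ≤ (q.derivative.eval c) ^ 2 - q.eval c * q.derivative.derivative.eval c ∧
    (q.eval c ≠ 0 → 0 < s.card →
      0 < (q.derivative.eval c) ^ 2 - q.eval c * q.derivative.derivative.eval c) := by
  induction s using Multiset.induction_on generalizing q with
  | empty => simp [hq]
  | cons a s ih =>
    obtain ⟨h1, -⟩ := ih _ rfl
    rw [Multiset.map_cons, Multiset.prod_cons] at hq
    generalize (s.map fun a => X - C a).prod = h at *
    subst hq
    have e : (eval c (derivative ((X - C a) * h))) ^ 2 -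
        eval c ((X - C a) * h) * eval c (derivative (derivative ((X - C a) * h))) =
        (h.eval c) ^ 2 + (c - a) ^ 2 *
          ((h.derivative.eval c) ^ 2 - h.eval c * h.derivative.derivative.eval c) := by
      simp only [derivative_mul, derivative_add, derivative_sub, derivative_X, derivative_C,
        eval_add, eval_mul, eval_sub, eval_X, eval_C, sub_zero, one_mul]
      ring
    rw [e]
    have h2 := mul_nonneg (sq_nonneg (c - a)) h1
    refine ⟨by positivity, fun h3 _ => ?_⟩
    have : h.eval c ≠ 0 := by
      intro h4; apply h3; simp [h4]
    have := pow_pos (abs_pos.2 this) 2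
    rw [sq_abs] at this
    linarith

theorem laguerre_ineq (p : ℝ[X]) (hp : p.roots.card = p.natDegree) (hd : 0 < p.natDegree) (c : ℝ)
    (hc : p.eval c ≠ 0) :
    0 < (p.derivative.eval c) ^ 2 - p.eval c * p.derivative.derivative.eval c := by
  have h := C_leadingCoeff_mul_prod_multiset_X_sub_C hp
  have hl := (laguerre_ineq_prod p.roots c _ rfl).2
  generalize (p.roots.map fun a => X - C a).prod = q at *
  generalize p.leadingCoeff = l at *
  rw [← h] at hc
  rw [← h]
  simp only [derivative_C_mul, eval_mul, eval_C] at hc ⊢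
  have h1 := hl (right_ne_zero_of_mul hc) (by omega)
  have h2 : 0 < l ^ 2 := by
    have := left_ne_zero_of_mul hc
    positivity
  have := mul_pos h2 h1
  linarith

theorem card_roots_derivative (p : ℝ[X]) (hp : p.roots.card = p.natDegree) :
    p.derivative.roots.card = p.derivative.natDegree := by
  have h1 := p.card_roots_le_derivative
  have h2 := card_roots' p.derivative
  have h3 := natDegree_derivative_le p
  omega

theorem iterate_facts (p : ℝ[X]) (hp : p.roots.card = p.natDegree)
    (hs : ∀ c, p.eval c = 0 → p.derivative.eval c ≠ 0) (k : ℕ) (hk : k ≤ p.natDegree) :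
    (derivative^[k] p).roots.card = (derivative^[k] p).natDegree ∧
    (derivative^[k] p).natDegree = p.natDegree - k ∧
    (∀ c, (derivative^[k] p).eval c = 0 → (derivative^[k + 1] p).eval c ≠ 0) := by
  induction k with
  | zero => exact ⟨hp, rfl, hs⟩
  | succ k ih =>
    obtain ⟨h1, h2, h3⟩ := ih (by omega)
    simp only [Function.iterate_succ_apply'] at h3 ⊢
    refine ⟨card_roots_derivative _ h1, ?_, ?_⟩
    · rw [natDegree_derivative, h2]; omega
    · intro c hc hc'
      have h4 : (derivative^[k] p).eval c ≠ 0 := fun h => h3 c h hc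
      have := laguerre_ineq _ h1 (by omega) c h4
      rw [hc, hc'] at this
      simp at this

theorem iterate_neg (p : ℝ[X]) (hp : p.roots.card = p.natDegree)
    (hs : ∀ c, p.eval c = 0 → p.derivative.eval c ≠ 0) (k : ℕ) (hk : k + 1 ≤ p.natDegree) (c : ℝ)
    (hc : (derivative^[k + 1] p).eval c = 0) :
    (derivative^[k + 2] p).eval c * (derivative^[k] p).eval c < 0 := by
  obtain ⟨h1, h2, h3⟩ := iterate_facts p hp hs k (by omega)
  have h4 : (derivative^[k] p).eval c ≠ 0 := fun h => h3 c h hc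
  have := laguerre_ineq _ h1 (by omega) c h4
  simp only [Function.iterate_succ_apply'] at hc ⊢
  rw [hc] at this
  linarith

/-- Charlier polynomials (two-index version). -/
noncomputable def charl (x : ℝ) : ℕ → ℕ → ℝ[X]
  | 0, k => descPochhammer ℝ k
  | n + 1, k => charl x n (k + 1) - C x * charl x n k

theorem charl_zero (x : ℝ) (k : ℕ) : charl x 0 (k + 1) = (X - (k : ℝ[X])) * charl x 0 k := by
  simp only [charl, descPochhammer_succ_right]
  ring

theorem charl_succ (x : ℝ) (n k : ℕ) : charl x (n + 1) (k + 1) =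
    (X - (k : ℝ[X]) - (n : ℝ[X]) - 1) * charl x (n + 1) k - ((n : ℝ[X]) + 1) * C x * charl x n k := by
  induction n generalizing k with
  | zero =>
    have h1 := charl_zero x k
    have h2 := charl_zero x (k + 1)
    simp only [charl] at h1 h2 ⊢
    rw [h2, h1]; push_cast; ring
  | succ n ih =>
    have e1 : charl x (n + 1 + 1) (k + 1) = charl x (n + 1) (k + 2) - C x * charl x (n + 1) (k + 1) := rfl
    have e2 : charl x (n + 1 + 1) k = charl x (n + 1) (k + 1) - C x * charl x (n + 1) k := rfl
    have e3 : charl x (n + 1) k = charl x n (k + 1) - C x * charl x n k := rfl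
    have h1 := ih k
    have h2 := ih (k + 1)
    push_cast at h2 ⊢
    rw [e1, e2]
    linear_combination h2 + C x * ((n : ℝ[X]) + 1) * e3 - C x * h1

theorem charl_deg (x : ℝ) (n k : ℕ) : (charl x n k).Monic ∧ (charl x n k).natDegree = n + k := by
  induction n generalizing k with
  | zero => exact ⟨monic_descPochhammer ℝ k, by simp [charl, descPochhammer_natDegree]⟩
  | succ n ih =>
    obtain ⟨h1, h2⟩ := ih k
    obtain ⟨h3, h4⟩ := ih (k + 1)
    have hlt : (C x * charl x n k).degree < (charl x n (k + 1)).degree := by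
      have h5 := degree_mul_le (C x) (charl x n k)
      have h6 : (C x).degree + (charl x n k).degree ≤ 0 + (charl x n k).degree := by
        gcongr
        exact degree_C_le
      rw [zero_add] at h6
      refine lt_of_le_of_lt (h5.trans h6) ?_
      rw [degree_eq_natDegree h1.ne_zero, degree_eq_natDegree h3.ne_zero, h2, h4]
      exact_mod_cast Nat.lt_succ_self _
    refine ⟨h3.sub_of_left hlt, ?_⟩
    have := natDegree_eq_of_degree_eq (degree_sub_eq_left_of_degree_lt hlt)
    simp only [charl]; rw [this, h4]; omega

theorem charl_coprime (x : ℝ) (hx : 0 < x) (c : ℝ) (m : ℕ) (h : (charl x (m + 1) 0).eval c = 0) :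
    (charl x m 0).eval c ≠ 0 := by
  induction m with
  | zero => simp [charl]
  | succ m ih =>
    intro h0
    apply ih h0
    have e : charl x (m + 2) 0 = charl x (m + 1) 1 - C x * charl x (m + 1) 0 := rfl
    have h1 := charl_succ x m 0
    have h2 : (charl x (m + 2) 0).eval c = - ((m + 1) * x * (charl x m 0).eval c) := by
      rw [e, h1]
      simp [h0]
    rw [h] at h2
    have h3 : ((m : ℝ) + 1) * x ≠ 0 := by positivity
    have h4 : ((m : ℝ) + 1) * x * (charl x m 0).eval c = 0 := by linarith
    exact (mul_eq_zero.1 h4).resolve_left h3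

theorem charl_eval_zero (x : ℝ) (n k : ℕ) :
    (charl x n (k + 1)).eval 0 = 0 ∧ (charl x n 0).eval 0 = (-x) ^ n := by
  induction n generalizing k with
  | zero => simp [charl, descPochhammer_succ_left]
  | succ n ih =>
    simp only [charl, eval_sub, eval_mul, eval_C, ih, pow_succ]
    constructor
    · simp
    · simp [ih 0]; ring

theorem charl_sum (x : ℝ) (n k : ℕ) : charl x n k =
    ∑ i ∈ range (n + 1), (n.choose i : ℝ[X]) * (C (-x) ^ i * descPochhammer ℝ (n - i + k)) := by
  induction n generalizing k with
  | zero => simp [charl]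
  | succ n ih =>
    rw [Finset.sum_choose_succ_mul (fun i j => C (-x) ^ i * descPochhammer ℝ (j + k))]
    simp only [charl]
    rw [ih, ih, sub_eq_add_neg, ← neg_mul, ← C_neg, mul_sum]
    congr 1
    · refine sum_congr rfl fun i hi => ?_
      rw [mem_range] at hi
      rw [show n + 1 - i + k = n - i + (k + 1) by omega]
    · refine sum_congr rfl fun i hi => ?_
      rw [pow_succ]; ring

theorem charl_real (x : ℝ) (hx : 0 < x) (n : ℕ) :
    (charl x n 0).roots.card = (charl x n 0).natDegree ∧
    ∀ c, (charl x n 0).eval c = 0 → (charl x n 0).derivative.eval c ≠ 0 := by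
  rcases n with _ | j
  · simp [charl]
  obtain ⟨a, b, ha, -, -, -, -, hnd⟩ := sturm (fun m => charl x m 0) (j + 1)
    (fun m _ => by simpa using (charl_deg x m 0).2)
    (fun m _ => by rw [(charl_deg x m 0).1.leadingCoeff]; exact one_pos)
    (fun m _ => by
      rw [(charl_eval_zero x m 0).2, ← mul_pow]
      simpa using pow_pos hx m)
    (fun m _ c hc h0 => by
      have e : charl x (m + 2) 0 = charl x (m + 1) 1 - C x * charl x (m + 1) 0 := rfl
      have h1 := charl_succ x m 0
      have h2 : (charl x (m + 2) 0).eval c = - ((m + 1) * x * (charl x m 0).eval c) := by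
        rw [e, h1]
        simp [h0]
      have h3 : (charl x m 0).eval c ≠ 0 := charl_coprime x hx c m h0
      simp only [h2]
      have : 0 < ((m : ℝ) + 1) * x * (charl x m 0).eval c ^ 2 := by positivity
      nlinarith) j le_rfl
  refine ⟨by rw [(charl_deg x (j + 1) 0).2, ha]; simp, fun c h1 h2 => ?_⟩
  have hne := (charl_deg x (j + 1) 0).1.ne_zero
  have := (one_lt_rootMultiplicity_iff_isRoot hne).2 ⟨h1, h2⟩
  rw [← count_roots] at this
  have h4 := Multiset.nodup_iff_count_le_one.1 hnd c
  exact absurd this (not_lt.2 h4)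

theorem iterate_derivative_shift (p : ℝ[X]) (r : ℝ) (k : ℕ) :
    derivative^[k] (p.comp (X + C r)) = (derivative^[k] p).comp (X + C r) := by
  induction k with
  | zero => rfl
  | succ k ih =>
    rw [Function.iterate_succ_apply', Function.iterate_succ_apply', ih, derivative_comp]
    simp

noncomputable def lagQ (n i : ℕ) : ℝ[X] := ∏ j ∈ Icc (i + 1) n, (X + C (j : ℝ))

theorem lagQ_desc (d i : ℕ) : lagQ (i + d) i = (descPochhammer ℝ d).comp (X + C ((i + d : ℕ) : ℝ)) := by
  induction d generalizing i with
  | zero => simp [lagQ]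
  | succ d ih =>
    have h := ih (i + 1)
    have e : lagQ (i + (d + 1)) i = (X + C ((i : ℝ) + 1)) * lagQ (i + 1 + d) (i + 1) := by
      unfold lagQ
      rw [show i + 1 + d = i + (d + 1) by omega,
        ← Finset.insert_Icc_add_one_left_eq_Icc (show i + 1 ≤ i + (d + 1) by omega),
        prod_insert (by simp)]
      push_cast; rfl
    rw [e, h, descPochhammer_succ_right, mul_comp, show i + 1 + d = i + (d + 1) by omega]
    simp only [sub_comp, X_comp, natCast_comp]
    push_cast
    simp only [map_add, map_natCast, map_one]
    ring

theorem taylor_pos (s : Finset ℕ) (z : ℝ) (hs : ∀ j ∈ s, 0 < z + j) (k : ℕ) :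
    0 ≤ (taylor z (∏ j ∈ s, (X + C (j : ℝ)))).coeff k ∧
    (k ≤ s.card → 0 < (taylor z (∏ j ∈ s, (X + C (j : ℝ)))).coeff k) := by
  induction s using Finset.induction_on generalizing k with
  | empty =>
    simp [taylor_one, coeff_one]
    split_ifs <;> simp_all
  | insert a s ha ih =>
    have ih := ih (fun j hj => hs j (mem_insert_of_mem hj))
    have hza := hs a (mem_insert_self a s)
    rw [prod_insert ha, taylor_mul, card_insert_of_notMem ha]
    generalize taylor z (∏ j ∈ s, (X + C (j : ℝ))) = T at *
    have e : taylor z (X + C (a : ℝ)) = X + C (z + a) := by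
      simp only [map_add, taylor_X, taylor_C]; ring
    rw [e, add_mul, coeff_add, coeff_C_mul]
    rcases k with _ | k
    · simp only [coeff_X_mul_zero, zero_add]
      exact ⟨mul_nonneg hza.le (ih 0).1, fun _ => mul_pos hza ((ih 0).2 (Nat.zero_le _))⟩
    · rw [coeff_X_mul]
      have h1 := mul_nonneg hza.le (ih (k + 1)).1
      refine ⟨add_nonneg (ih k).1 h1, fun hk => ?_⟩
      have := (ih k).2 (by omega)
      linarith

theorem lagQ_pos (n i k : ℕ) (hk : k + i ≤ n) (z : ℝ) (hz : -1 < z) :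
    0 < (derivative^[k] (lagQ n i)).eval z := by
  have h := (taylor_pos (Icc (i + 1) n) z (fun j hj => by
    have h1 : 1 ≤ j := by have := (mem_Icc.1 hj).1; omega
    have : (1 : ℝ) ≤ j := by exact_mod_cast h1
    linarith) k).2 (by rw [Nat.card_Icc]; omega)
  rw [taylor_coeff] at h
  rw [← factorial_smul_hasseDeriv]
  have e : ((k.factorial • hasseDeriv k) (lagQ n i) : ℝ[X]) =
      (k.factorial : ℝ[X]) * hasseDeriv k (lagQ n i) := by
    rw [LinearMap.smul_apply, nsmul_eq_mul]
  rw [e, eval_mul, eval_natCast]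
  exact mul_pos (by exact_mod_cast k.factorial_pos) h

theorem lagQ_zero (n i k : ℕ) (hk : n < k + i) (hi : i ≤ n) : derivative^[k] (lagQ n i) = 0 := by
  apply iterate_derivative_eq_zero
  unfold lagQ
  refine lt_of_le_of_lt (natDegree_prod_le _ _) ?_
  simp only [natDegree_X_add_C, sum_const, Nat.card_Icc, smul_eq_mul]
  omega

theorem laguerreDz_sum (n k : ℕ) (z : ℝ) : laguerreDz n k z =
    ∑ i ∈ range (n + 1), C ((-1 : ℝ) ^ i / ((i.factorial : ℝ) * ((n - i).factorial : ℝ)) *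
      (derivative^[k] (lagQ n i)).eval z) * X ^ i := by
  unfold laguerreDz laguerreBiv
  rw [iterate_derivative_sum, eval_finsetSum]
  refine sum_congr rfl fun i _ => ?_
  have e : ∏ j ∈ Icc (i + 1) n, ((X : ℝ[X][X]) + C (C (j : ℝ))) = (lagQ n i).map C := by
    simp [lagQ, Polynomial.map_prod]
  rw [e, iterate_derivative_C_mul, iterate_derivative_map, eval_mul, eval_C, eval_map,
    eval₂_at_apply, C_mul]
  ring

theorem laguerreDz_coeff (n k : ℕ) (z : ℝ) (m : ℕ) : (laguerreDz n k z).coeff m =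
    if m ≤ n then (-1 : ℝ) ^ m / ((m.factorial : ℝ) * ((n - m).factorial : ℝ)) *
      (derivative^[k] (lagQ n m)).eval z else 0 := by
  rw [laguerreDz_sum, finset_sum_coeff]
  simp only [coeff_C_mul_X_pow]
  rw [sum_ite_eq]
  simp [Nat.lt_succ_iff]

theorem laguerreDz_coeff_sign (n k m : ℕ) (z : ℝ) (hz : -1 < z) (h : k + m ≤ n) :
    0 < (-1 : ℝ) ^ m * (laguerreDz n k z).coeff m := by
  rw [laguerreDz_coeff, if_pos (show m ≤ n by omega)]
  have h1 := lagQ_pos n m k h z hz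
  have h2 : ((-1 : ℝ) ^ m) * (-1) ^ m = 1 := by rw [← mul_pow]; simp
  have : (-1 : ℝ) ^ m * ((-1 : ℝ) ^ m / ((m.factorial : ℝ) * ((n - m).factorial : ℝ)) *
      (derivative^[k] (lagQ n m)).eval z) =
      (derivative^[k] (lagQ n m)).eval z / ((m.factorial : ℝ) * ((n - m).factorial : ℝ)) := by
    linear_combination (derivative^[k] (lagQ n m)).eval z / ((m.factorial : ℝ) * ((n - m).factorial : ℝ)) * h2
  rw [this]
  positivity

theorem laguerreDz_natDegree (n k : ℕ) (z : ℝ) (hz : -1 < z) (hk : k ≤ n) :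
    (laguerreDz n k z).natDegree = n - k := by
  refine natDegree_eq_of_le_of_coeff_ne_zero ?_ ?_
  · rw [natDegree_le_iff_coeff_eq_zero]
    intro m hm
    rw [laguerreDz_coeff]
    split_ifs with h
    · rw [lagQ_zero n m k (by omega) h]; simp
    · rfl
  · have := laguerreDz_coeff_sign n k (n - k) z hz (by omega)
    exact right_ne_zero_of_mul this.ne'

theorem laguerreDz_eval (n k : ℕ) (z x : ℝ) : (laguerreDz n k z).eval x =
    (1 / (n.factorial : ℝ)) * (derivative^[k] (charl x n 0)).eval (z + n) := by
  have e : C (1 / (n.factorial : ℝ)) * (charl x n 0).comp (X + C (n : ℝ)) =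
      ∑ i ∈ range (n + 1), C ((-1 : ℝ) ^ i / ((i.factorial : ℝ) * ((n - i).factorial : ℝ)) * x ^ i) *
        lagQ n i := by
    rw [charl_sum, ← coe_compRingHom_apply, map_sum, mul_sum]
    simp only [coe_compRingHom_apply]
    refine sum_congr rfl fun i hi => ?_
    have hi' : i ≤ n := by rw [mem_range] at hi; omega
    obtain ⟨d, rfl⟩ := Nat.exists_eq_add_of_le hi'
    rw [lagQ_desc]
    simp only [mul_comp, natCast_comp, pow_comp, C_comp, add_zero, Nat.add_sub_cancel_left]
    rw [← mul_assoc, ← mul_assoc, ← C_pow, ← C_eq_natCast, ← C_mul, ← C_mul]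
    congr 2
    rw [Nat.cast_choose ℝ hi', Nat.add_sub_cancel_left, neg_pow]
    have : ((i + d).factorial : ℝ) ≠ 0 := by positivity
    field_simp
  have h : (derivative^[k] (C (1 / (n.factorial : ℝ)) * (charl x n 0).comp (X + C (n : ℝ)))).eval z =
      (laguerreDz n k z).eval x := by
    rw [e, iterate_derivative_sum, eval_finsetSum, laguerreDz_sum, eval_finsetSum]
    refine sum_congr rfl fun i _ => ?_
    rw [iterate_derivative_C_mul]
    simp only [eval_mul, eval_C, eval_pow, eval_X]
    ring
  rw [← h, iterate_derivative_C_mul, iterate_derivative_shift]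
  simp

theorem laguerreDz_neg (n k : ℕ) (hk : k + 1 ≤ n) (z x : ℝ) (hx : 0 < x)
    (h : (laguerreDz n (k + 1) z).eval x = 0) :
    (laguerreDz n (k + 2) z).eval x * (laguerreDz n k z).eval x < 0 := by
  rw [laguerreDz_eval] at h
  have hf : 0 < 1 / (n.factorial : ℝ) := by positivity
  obtain ⟨h1, h2⟩ := charl_real x hx n
  have := iterate_neg _ h1 h2 k (by rw [(charl_deg x n 0).2]; exact hk) (z + n)
    ((mul_eq_zero.1 h).resolve_left hf.ne')
  rw [laguerreDz_eval, laguerreDz_eval]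
  have h3 := mul_pos hf hf
  nlinarith

theorem laguerreDz_interlacing (n k : Nat) (hk : k < n) (z : Real) (hz : -1 < z) :
    ∃ a b : Nat → Real,
      (laguerreDz n k z).roots = (Multiset.range (n - k)).map a ∧
      (laguerreDz n (k + 1) z).roots = (Multiset.range (n - k - 1)).map b ∧
      (∀ i : Nat, i + 1 < n - k → a (i + 1) < a i) ∧
      (∀ i : Nat, i < n - k - 1 → b i < a i ∧ a (i + 1) < b i) := by
  have hne : ∀ j : ℕ, ((-1 : ℝ) ^ j) ≠ 0 := fun j => by simp
  obtain ⟨a, b, h1, h2, h3, h4, -, -⟩ := sturm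
    (fun j => C ((-1 : ℝ) ^ j) * laguerreDz n (n - j) z) n
    (fun j hj => by
      rw [natDegree_C_mul (hne j), laguerreDz_natDegree n (n - j) z hz (by omega)]; omega)
    (fun j hj => by
      rw [leadingCoeff, natDegree_C_mul (hne j), laguerreDz_natDegree n (n - j) z hz (by omega),
        coeff_C_mul, show n - (n - j) = j by omega]
      exact laguerreDz_coeff_sign n (n - j) j z hz (by omega))
    (fun j hj => by
      have := laguerreDz_coeff_sign n (n - j) 0 z hz (by omega)
      rw [coeff_zero_eq_eval_zero] at this
      have h2 : ((-1 : ℝ) ^ j) * (-1) ^ j = 1 := by rw [← mul_pow]; simp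
      simp only [eval_mul, eval_C]
      rw [← mul_assoc, h2]
      simpa using this)
    (fun j hj x hx h => by
      simp only [eval_mul, eval_C] at h ⊢
      have h0 := (mul_eq_zero.1 h).resolve_left (hne _)
      rw [show n - (j + 1) = n - (j + 2) + 1 by omega] at h0
      have := laguerreDz_neg n (n - (j + 2)) (by omega) z x hx h0
      rw [show n - (j + 2) + 2 = n - j by omega] at this
      have h2 : ((-1 : ℝ) ^ j) * (-1) ^ (j + 2) = 1 := by rw [← pow_add, show j + (j + 2) = 2 * (j + 1) by ring, pow_mul]; simp
      calc _ = ((-1 : ℝ) ^ j * (-1) ^ (j + 2)) *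
            ((laguerreDz n (n - j) z).eval x * (laguerreDz n (n - (j + 2)) z).eval x) := by ring
        _ < 0 := by rw [h2, one_mul]; exact this)
    (n - k - 1) (by omega)
  simp only [roots_C_mul _ (hne _)] at h1 h2
  rw [show n - k - 1 + 1 = n - k by omega] at h1 h3
  rw [show n - (n - k) = k by omega] at h1
  rw [show n - (n - k - 1) = k + 1 by omega] at h2
  exact ⟨a, b, h1, h2, h3, h4⟩
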